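/- Let S ⊆ ℝ^n be nonempty, convex and compact, φ : ℝ^n → ℝ differentiable with ℓ-Lipschitz continuous gradient, A : ℝ^n → ℝ^s and K : ℝ^n → ℝ^p linear maps, σ_A := ‖A‖². Let g : ℝ^s → ℝ ∪ {+∞} and f : ℝ^p → ℝ ∪ {+∞} be proper, convex and lower semicontinuous, and let G = g* and H = f* be their Fenchel conjugates. Assume A(S) is contained in the relative interior of dom g, and that there exists F̲ ∈ ℝ such that f(K x) + F̲ ≤ g(A x) + φ(x) for all x ∈ S (inequality in ℝ ∪ {+∞}). Let γ > 0, 0 < α < γ/2, μ > 0, and suppose the parameter sequences satisfy: α_k → α, α + γ ≥ α_0 ≥ α_k ≥ α_{k+1} > α, (α_k − α_{k+1})/((α_{k+1} − α)(α_k − α)) ≤ 1/γ and (α_k − α)(α_{k+2} − α) ≥ (α_{k+1} − α)² for all k ≥ 0; 0 < β̲ ≤ β_k ≤ β̄ < +∞; δ_k = α/α_k; and ρ_k = ℓ/2 + 3σ_Aγ/(2(α_k − α)²) + μ. Let x^0 ∈ S, y^0 ∈ ℝ^p, z^0 ∈ ℝ^s and for all k ≥ 0 define: x^{k+1} as the point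 of S minimizing the distance to x^k − (1/ρ_k)(A*z^k − K*y^k + ∇φ(x^k)); y^{k+1} as the unique minimizer over ℝ^p of y ↦ H(y) − ⟨K x^{k+1}, y⟩ + (β_k/2)‖y − y^k‖²; and z^{k+1} as the unique minimizer over ℝ^s of z ↦ G(z) − ⟨A x^{k+1}, z⟩ + (α_k/2)‖z − δ_k z^k‖². Define Ψ and ψ_k (k ≥ 2) as follows: Ψ(x, y, z) = ⟨z, A x⟩ − G(z) + φ(x) − ⟨K x, y⟩ + H(y), ψ_k = Ψ(x^k, y^k, z^k) + α(1/2 + 2α/(α_k − α))‖z^k − z^{k−1}‖² − ((1/2)(α_{k−2} − α) − 2α(α_{k−1} − α_{k−2})/(α_{k−1} − α))‖z^k‖². If the sequence (z^k)_{k≥0} is bounded, then: (i) (ψ_k)_{k≥2} is bounded from below; (ii) (ψ_k)_{k≥2} converges to a real limit; (iii) ‖x^k − x^{k+1}‖ → 0, ‖y^k − y^{k+1}‖ → 0 and ‖z^k − z^{k+1}‖ → 0 as k → +∞. -/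

import Mathlib

open Filter RealInnerProductSpace

section Conjugate

variable {E : Type*} [NormedAddCommGroup E] [InnerProductSpace ℝ E]

/-- A proper convex lower semicontinuous function has a continuous affine minorant. -/
lemma exists_affine_minorant {E : Type*} [NormedAddCommGroup E] [NormedSpace ℝ E] {g : E → EReal}
    (hbot : ∀ v, g v ≠ ⊥) (htop : ∃ v, g v ≠ ⊤)
    (hconv : ∀ v w : E, ∀ a b : ℝ, 0 ≤ a → 0 ≤ b → a + b = 1 →
      g (a • v + b • w) ≤ (a : EReal) * g v + (b : EReal) * g w)
    (hlsc : LowerSemicontinuous g) :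
    ∃ (L : StrongDual ℝ E) (c : ℝ), ∀ v (r : ℝ), g v ≤ r → L v - r ≤ c := by
  obtain ⟨v₀, hv₀⟩ := htop
  lift g v₀ to ℝ using ⟨hv₀, hbot v₀⟩ with r₀ hr₀
  have hclosed : IsClosed {q : E × ℝ | g q.1 ≤ (q.2 : EReal)} :=
    hlsc.isClosed_epigraph.preimage
      (continuous_fst.prodMk (continuous_coe_real_ereal.comp continuous_snd))
  have hcvx : Convex ℝ {q : E × ℝ | g q.1 ≤ (q.2 : EReal)} := by
    rintro ⟨v, r⟩ hv ⟨w, t⟩ hw a b ha hb hab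
    simp only [Set.mem_ofPred_eq, Prod.smul_mk, Prod.mk_add_mk, smul_eq_mul] at hv hw ⊢
    refine (hconv v w a b ha hb hab).trans ?_
    push_cast
    gcongr
  have hnot : ((v₀, r₀ - 1) : E × ℝ) ∉ {q : E × ℝ | g q.1 ≤ (q.2 : EReal)} := by
    simp only [Set.mem_ofPred_eq, ← hr₀, EReal.coe_le_coe_iff]
    linarith
  obtain ⟨F, u, hu, hF⟩ := geometric_hahn_banach_point_closed hcvx hclosed hnot
  have hdec : ∀ (v : E) (r : ℝ), F (v, r) = F (v, 0) + r * F (0, 1) := by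
    intro v r
    have : ((v, r) : E × ℝ) = (v, 0) + r • (0, 1) := by simp
    rw [this, map_add, map_smul, smul_eq_mul]
  have h₀ := hF (v₀, r₀) (by simp [← hr₀])
  rw [hdec] at hu h₀
  have hκ : 0 < F (0, 1) := by linarith
  refine ⟨-(F (0, 1))⁻¹ • F.comp (.inl ℝ E ℝ), -(F (0, 1))⁻¹ * u, fun v r hr => ?_⟩
  have h := hF (v, r) hr
  rw [hdec] at h
  have hmul := mul_le_mul_of_nonneg_left h.le (inv_pos.2 hκ).le
  have hcancel : (F (0, 1))⁻¹ * (F (v, 0) + r * F (0, 1)) = (F (0, 1))⁻¹ * F (v, 0) + r := by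
    field_simp
  simp only [FunLike.coe_smul, Pi.smul_apply, ContinuousLinearMap.comp_apply,
    ContinuousLinearMap.inl_apply, smul_eq_mul]
  linarith

/-- A convex function is bounded above on compact subsets of the relative interior of its
domain. -/
lemma exists_upper_bound_of_subset_intrinsicInterior {E : Type*} [NormedAddCommGroup E]
    [NormedSpace ℝ E] [FiniteDimensional ℝ E] {g : E → EReal} (hbot : ∀ v, g v ≠ ⊥)
    (hconv : ∀ v w : E, ∀ a b : ℝ, 0 ≤ a → 0 ≤ b → a + b = 1 →
      g (a • v + b • w) ≤ (a : EReal) * g v + (b : EReal) * g w)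
    {C : Set E} (hC : IsCompact C) (hCsub : C ⊆ intrinsicInterior ℝ {v | g v ≠ ⊤}) :
    ∃ M : ℝ, ∀ v ∈ C, g v ≤ M := by
  rcases C.eq_empty_or_nonempty with rfl | ⟨v₀, hv₀⟩
  · exact ⟨0, by simp⟩
  have hspan : ∀ v ∈ C, v ∈ affineSpan ℝ {v | g v ≠ ⊤} := fun v hv =>
    subset_affineSpan ℝ _ (intrinsicInterior_subset (hCsub hv))
  set V := (affineSpan ℝ {v | g v ≠ ⊤}).direction
  let ι : V → E := fun d => (d : E) + v₀
  have hιc : Continuous ι := by fun_prop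
  have hιmem : ∀ d, ι d ∈ affineSpan ℝ {v | g v ≠ ⊤} := fun d =>
    AffineSubspace.vadd_mem_of_mem_direction d.2 (hspan v₀ hv₀)
  have hιconv : ∀ (d e : V) (a b : ℝ), a + b = 1 → ι (a • d + b • e) = a • ι d + b • ι e := by
    intro d e a b hab
    have : v₀ = a • v₀ + b • v₀ := by rw [← add_smul, hab, one_smul]
    simp only [ι, Submodule.coe_add, Submodule.coe_smul, smul_add]
    nth_rewrite 1 [this]
    abel
  have key : ∀ (d e : V) (a b : ℝ), g (ι d) ≠ ⊤ → g (ι e) ≠ ⊤ → 0 ≤ a → 0 ≤ b → a + b = 1 →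
      g (ι (a • d + b • e)) ≤
        ((a * (g (ι d)).toReal + b * (g (ι e)).toReal : ℝ) : EReal) := by
    intro d e a b hd he ha hb hab
    rw [hιconv d e a b hab]
    refine (hconv _ _ a b ha hb hab).trans ?_
    push_cast
    rw [EReal.coe_toReal hd (hbot _), EReal.coe_toReal he (hbot _)]
  have hcvx : ConvexOn ℝ (ι ⁻¹' {v | g v ≠ ⊤}) (fun d => (g (ι d)).toReal) := by
    refine ⟨fun d hd e he a b ha hb hab => ?_, fun d hd e he a b ha hb hab => ?_⟩
    · exact ((key d e a b hd he ha hb hab).trans_lt (EReal.coe_lt_top _)).ne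
    · have h := EReal.toReal_le_toReal (key d e a b hd he ha hb hab) (hbot _) (EReal.coe_ne_top _)
      rwa [EReal.toReal_coe] at h
  have hsub : ι ⁻¹' C ⊆ interior (ι ⁻¹' {v | g v ≠ ⊤}) := by
    intro d hd
    obtain ⟨q, hq, hqd⟩ := mem_intrinsicInterior.1 (hCsub hd)
    let e : V → affineSpan ℝ {v | g v ≠ ⊤} := fun d => ⟨ι d, hιmem d⟩
    have he : Continuous e := hιc.subtype_mk _
    have hqe : e d = q := Subtype.ext hqd.symm
    have hsub' : e ⁻¹' interior (Subtype.val ⁻¹' {v | g v ≠ ⊤}) ⊆ ι ⁻¹' {v | g v ≠ ⊤} :=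
      Set.preimage_mono (f := e) interior_subset
    refine interior_maximal hsub' (isOpen_interior.preimage he) ?_
    rwa [Set.mem_preimage, hqe]
  have hcpt : IsCompact (ι ⁻¹' C) := by
    have hemb : Topology.IsClosedEmbedding ι :=
      (Homeomorph.addRight v₀).isClosedEmbedding.comp
        V.closed_of_finiteDimensional.isClosedEmbedding_subtypeVal
    exact hemb.isCompact_preimage hC
  obtain ⟨M, hM⟩ := (hcpt.image_of_continuousOn (hcvx.continuousOn_interior.mono hsub)).bddAbove
  refine ⟨M, fun v hv => ?_⟩
  have hd : v - v₀ ∈ V := AffineSubspace.vsub_mem_direction (hspan v hv) (hspan v₀ hv₀)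
  have hιd : ι ⟨v - v₀, hd⟩ = v := by simp [ι]
  have h := hM ⟨⟨v - v₀, hd⟩, by simpa [hιd] using hv, rfl⟩
  simp only [hιd] at h
  have htop : g v ≠ ⊤ := intrinsicInterior_subset (hCsub hv)
  rw [← EReal.coe_toReal htop (hbot v)]
  exact_mod_cast h

lemma ne_top_of_add_coe_le {a b : EReal} {r t : ℝ} (hb : b ≠ ⊤) (h : a + r ≤ b + t) : a ≠ ⊤ := by
  rintro rfl
  rw [EReal.top_add_coe, top_le_iff] at h
  exact EReal.add_ne_top hb (EReal.coe_ne_top t) h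

lemma conjugate_le_coe_iff {g G : E → EReal} (hbot : ∀ v, g v ≠ ⊥)
    (hG : ∀ w, G w = ⨆ v, ((⟪w, v⟫ : ℝ) : EReal) - g v) {w : E} {c : ℝ} :
    G w ≤ c ↔ ∀ v (r : ℝ), g v ≤ r → ⟪w, v⟫ - r ≤ c := by
  rw [hG, iSup_le_iff]
  refine forall_congr' fun v => ⟨fun h r hr => ?_, fun h => ?_⟩
  · exact_mod_cast (EReal.sub_le_sub le_rfl hr).trans h
  · by_cases htop : g v = ⊤
    · simp [htop]
    · lift g v to ℝ using ⟨htop, hbot v⟩ with r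
      exact_mod_cast h r le_rfl

lemma conjugate_ne_bot {g G : E → EReal} (hbot : ∀ v, g v ≠ ⊥) (htop : ∃ v, g v ≠ ⊤)
    (hG : ∀ w, G w = ⨆ v, ((⟪w, v⟫ : ℝ) : EReal) - g v) (w : E) : G w ≠ ⊥ := by
  obtain ⟨v, hv⟩ := htop
  lift g v to ℝ using ⟨hv, hbot v⟩ with r hr
  intro h
  have h' := (conjugate_le_coe_iff hbot hG (c := ⟪w, v⟫ - r - 1)).1 (h ▸ bot_le) v r hr.ge
  linarith

lemma exists_conjugate_ne_top [CompleteSpace E] {g G : E → EReal} (hbot : ∀ v, g v ≠ ⊥)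
    (htop : ∃ v, g v ≠ ⊤)
    (hconv : ∀ v w : E, ∀ a b : ℝ, 0 ≤ a → 0 ≤ b → a + b = 1 →
      g (a • v + b • w) ≤ (a : EReal) * g v + (b : EReal) * g w)
    (hlsc : LowerSemicontinuous g) (hG : ∀ w, G w = ⨆ v, ((⟪w, v⟫ : ℝ) : EReal) - g v) :
    ∃ w, G w ≠ ⊤ := by
  obtain ⟨L, c, hL⟩ := exists_affine_minorant hbot htop hconv hlsc
  refine ⟨(InnerProductSpace.toDual ℝ E).symm L, ne_top_of_le_ne_top (EReal.coe_ne_top c) ?_⟩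
  rw [conjugate_le_coe_iff hbot hG]
  simpa using hL

lemma nonpos_of_forall_mul_le_sq {c d : ℝ} (h : ∀ t : ℝ, 0 < t → t ≤ 1 → t * c ≤ t ^ 2 * d) :
    c ≤ 0 := by
  have hlim : Tendsto (fun t : ℝ => t * d) (nhdsWithin 0 (Set.Ioi 0)) (nhds 0) := by
    have : Tendsto (fun t : ℝ => t * d) (nhds 0) (nhds (0 * d)) :=
      (continuous_id.mul continuous_const).tendsto 0
    rw [zero_mul] at this
    exact this.mono_left nhdsWithin_le_nhds
  refine ge_of_tendsto hlim ?_
  filter_upwards [Ioc_mem_nhdsGT (zero_lt_one' ℝ)] with t ht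
  have := h t ht.1 ht.2
  nlinarith [ht.1]

/-- The optimality condition of a proximal step on a Fenchel conjugate. -/
lemma prox_subgradient {g G : E → EReal} (hbot : ∀ v, g v ≠ ⊥)
    (hG : ∀ w, G w = ⨆ v, ((⟪w, v⟫ : ℝ) : EReal) - g v) {u q z : E} {α a : ℝ} (hz : G z = a)
    (hmin : ∀ w, G z + ((-⟪u, z⟫ + α / 2 * ‖z - q‖ ^ 2 : ℝ) : EReal) ≤
      G w + ((-⟪u, w⟫ + α / 2 * ‖w - q‖ ^ 2 : ℝ) : EReal))
    {w : E} {b : ℝ} (hw : G w = b) :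
    a + ⟪u - α • (z - q), w - z⟫ ≤ b := by
  have key : a - b + ⟪u - α • (z - q), w - z⟫ ≤ 0 := by
    refine nonpos_of_forall_mul_le_sq (d := α / 2 * ‖w - z‖ ^ 2) fun t ht ht1 => ?_
    have hcomb : G (z + t • (w - z)) ≤ ((1 - t) * a + t * b : ℝ) := by
      rw [conjugate_le_coe_iff hbot hG]
      intro v r hr
      have h1 := (conjugate_le_coe_iff hbot hG).1 hz.le v r hr
      have h2 := (conjugate_le_coe_iff hbot hG).1 hw.le v r hr
      rw [inner_add_left, real_inner_smul_left, inner_sub_left]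
      nlinarith
    have h := (hmin (z + t • (w - z))).trans (add_le_add hcomb le_rfl)
    rw [hz] at h
    have h' : a + (-⟪u, z⟫ + α / 2 * ‖z - q‖ ^ 2) ≤ ((1 - t) * a + t * b) +
        (-⟪u, z + t • (w - z)⟫ + α / 2 * ‖z + t • (w - z) - q‖ ^ 2) := by exact_mod_cast h
    have hn : ‖z + t • (w - z) - q‖ ^ 2 =
        ‖z - q‖ ^ 2 + 2 * t * ⟪z - q, w - z⟫ + t ^ 2 * ‖w - z‖ ^ 2 := by
      rw [add_sub_right_comm, norm_add_sq_real, real_inner_smul_right, norm_smul, mul_pow,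
        Real.norm_eq_abs, sq_abs]
      ring
    rw [hn, inner_add_right, real_inner_smul_right] at h'
    rw [inner_sub_left, real_inner_smul_left]
    linarith
  linarith

/-- A projected step is a descent direction for the linearisation. -/
lemma inner_le_of_projected_step {S : Set E} (hS : Convex ℝ S) {x x' c : E} {ρ : ℝ} (hρ : 0 < ρ)
    (hx : x ∈ S) (hx' : x' ∈ S)
    (hmin : ∀ v ∈ S, ‖x' - (x - ρ⁻¹ • c)‖ ≤ ‖v - (x - ρ⁻¹ • c)‖) :
    ⟪c, x' - x⟫ ≤ -ρ * ‖x' - x‖ ^ 2 := by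
  have key : 2 * (‖x' - x‖ ^ 2 + ρ⁻¹ * ⟪c, x' - x⟫) ≤ 0 := by
    refine nonpos_of_forall_mul_le_sq (d := ‖x' - x‖ ^ 2) fun t ht ht1 => ?_
    have hmem : x' - t • (x' - x) ∈ S := by
      have := hS hx hx' ht.le (sub_nonneg.2 ht1) (by ring)
      convert this using 1
      module
    have h := pow_le_pow_left₀ (norm_nonneg _) (hmin _ hmem) 2
    have e1 : x' - (x - ρ⁻¹ • c) = (x' - x) + ρ⁻¹ • c := by abel
    have e2 : x' - t • (x' - x) - (x - ρ⁻¹ • c) = ((x' - x) + ρ⁻¹ • c) - t • (x' - x) := by abel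
    rw [e1, e2, norm_sub_sq_real (_ + _), real_inner_smul_right, norm_smul, mul_pow,
      Real.norm_eq_abs, sq_abs, inner_add_left, real_inner_smul_left,
      real_inner_self_eq_norm_sq] at h
    linarith
  have hc : ρ * (‖x' - x‖ ^ 2 + ρ⁻¹ * ⟪c, x' - x⟫) = ρ * ‖x' - x‖ ^ 2 + ⟪c, x' - x⟫ := by
    field_simp
  nlinarith

/-- The descent lemma for a function with Lipschitz gradient. -/
lemma le_quadratic_of_gradient_lipschitz [CompleteSpace E] {φ : E → ℝ} {gφ : E → E} {ℓ : ℝ}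
    (hφ : ∀ u, HasGradientAt φ (gφ u) u) (hlip : ∀ u v, ‖gφ u - gφ v‖ ≤ ℓ * ‖u - v‖) (u v : E) :
    φ v ≤ φ u + ⟪gφ u, v - u⟫ + ℓ / 2 * ‖v - u‖ ^ 2 := by
  have hder : ∀ t : ℝ, HasDerivAt
      (fun t : ℝ => φ (u + t • (v - u)) - t * ⟪gφ u, v - u⟫ - ℓ / 2 * ‖v - u‖ ^ 2 * t ^ 2)
      (⟪gφ (u + t • (v - u)), v - u⟫ - ⟪gφ u, v - u⟫ - ℓ * ‖v - u‖ ^ 2 * t) t := by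
    intro t
    have hline : HasDerivAt (fun t : ℝ => u + t • (v - u)) (v - u) t := by
      simpa using ((hasDerivAt_id t).smul_const (v - u)).const_add u
    have h1 := (hφ (u + t • (v - u))).hasFDerivAt.comp_hasDerivAt t hline
    have h2 := (hasDerivAt_id t).mul_const ⟪gφ u, v - u⟫
    have h3 := (hasDerivAt_pow 2 t).const_mul (ℓ / 2 * ‖v - u‖ ^ 2)
    refine ((h1.sub h2).sub h3).congr_deriv ?_
    rw [InnerProductSpace.toDual_apply_apply]
    push_cast
    ring
  have hanti := antitoneOn_of_deriv_nonpos (convex_Icc (0 : ℝ) 1)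
    (fun t _ => (hder t).continuousAt.continuousWithinAt)
    (fun t _ => (hder t).differentiableAt.differentiableWithinAt) (fun t ht => by
      rw [interior_Icc] at ht
      rw [(hder t).deriv, ← inner_sub_left]
      have h1 := real_inner_le_norm (gφ (u + t • (v - u)) - gφ u) (v - u)
      have h2 := hlip (u + t • (v - u)) u
      rw [add_sub_cancel_left, norm_smul, Real.norm_eq_abs, abs_of_pos ht.1] at h2
      nlinarith [mul_le_mul_of_nonneg_right h2 (norm_nonneg (v - u))])
  have h := hanti (Set.left_mem_Icc.2 zero_le_one) (Set.right_mem_Icc.2 zero_le_one) zero_le_one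
  simp at h
  linarith

end Conjugate

section Energy

/-- One step of the dual energy estimate: `z₀, z₁, z₂` are successive dual iterates, `u₁, u₂` the
successive images of the primal iterates, and `a₀ ≥ a₁ ≥ a₂` the excess step sizes. -/
lemma dual_energy_step {F : Type*} [NormedAddCommGroup F] [InnerProductSpace ℝ F]
    {z₀ z₁ z₂ u₁ u₂ : F} {α γ a₀ a₁ a₂ G₁ G₂ N d : ℝ} (hα : 0 < α) (hαγ : α < γ / 2)
    (ha₁ : 0 < a₁) (ha₁₀ : a₁ ≤ a₀) (ha₁γ : a₁ ≤ γ) (ha₂ : a₂⁻¹ ≤ a₁⁻¹ + γ⁻¹)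
    (h₁ : G₁ + ⟪u₁ - ((α + a₀) • z₁ - α • z₀), z₂ - z₁⟫ ≤ G₂)
    (h₂ : G₂ + ⟪u₂ - ((α + a₁) • z₂ - α • z₁), z₁ - z₂⟫ ≤ G₁)
    (hu : ‖u₂ - u₁‖ ≤ N * d) :
    ⟪z₂, u₂⟫ - G₂ + α * (1 / 2 + 2 * α / a₂) * ‖z₂ - z₁‖ ^ 2
        - (1 / 2 * a₀ + 2 * α * (a₀ - a₁) / a₁) * ‖z₂‖ ^ 2
        + (α - 2 * α ^ 2 / γ) * ‖z₂ - z₁‖ ^ 2 ≤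
      ⟪z₁, u₂⟫ - G₁ + α * (1 / 2 + 2 * α / a₁) * ‖z₁ - z₀‖ ^ 2
        - (1 / 2 * a₀ + 2 * α * (a₀ - a₁) / a₁) * ‖z₁‖ ^ 2
        + 3 * N ^ 2 * γ / (2 * a₁ ^ 2) * d ^ 2 := by
  have hI : ⟪u₂ - u₁, z₂ - z₁⟫ ≤ N * d * ‖z₂ - z₁‖ :=
    (real_inner_le_norm _ _).trans (mul_le_mul_of_nonneg_right hu (norm_nonneg _))
  have hJ : 2 * ⟪z₁ - z₀, z₂ - z₁⟫ ≤ ‖z₁ - z₀‖ ^ 2 + ‖z₂ - z₁‖ ^ 2 := by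
    have := norm_sub_sq_real (z₁ - z₀) (z₂ - z₁)
    nlinarith [sq_nonneg ‖z₁ - z₀ - (z₂ - z₁)‖]
  have hz : 2 * ⟪z₁, z₂ - z₁⟫ = ‖z₂‖ ^ 2 - ‖z₁‖ ^ 2 - ‖z₂ - z₁‖ ^ 2 := by
    have := norm_add_sq_real z₁ (z₂ - z₁)
    rw [add_sub_cancel] at this
    linarith
  have e₁ : u₁ - ((α + a₀) • z₁ - α • z₀) = u₂ - (u₂ - u₁) - a₀ • z₁ - α • (z₁ - z₀) := by
    module
  rw [e₁] at h₁
  have hdec : ⟪z₂, u₂⟫ - ⟪z₁, u₂⟫ - (G₂ - G₁) ≤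
      ⟪u₂ - u₁, z₂ - z₁⟫ + a₀ * ⟪z₁, z₂ - z₁⟫ + α * ⟪z₁ - z₀, z₂ - z₁⟫ := by
    rw [inner_sub_left, inner_sub_left, inner_sub_left _ (u₂ - u₁), real_inner_smul_left,
      real_inner_smul_left] at h₁
    have := inner_sub_left (𝕜 := ℝ) z₂ z₁ u₂
    rw [real_inner_comm] at this
    linarith
  have hmon : (α + a₁) * ‖z₂ - z₁‖ ^ 2 ≤
      ⟪u₂ - u₁, z₂ - z₁⟫ + (a₀ - a₁) * ⟪z₁, z₂ - z₁⟫ + α * ⟪z₁ - z₀, z₂ - z₁⟫ := by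
    have e₂ : u₂ - ((α + a₁) • z₂ - α • z₁) = u₂ - (α + a₁) • (z₂ - z₁) - a₁ • z₁ := by
      module
    rw [← neg_sub z₂ z₁, inner_neg_right, e₂] at h₂
    simp only [inner_sub_left _ (_ • _), inner_sub_left _ (u₂ - u₁), real_inner_smul_left] at h₁ h₂
    rw [real_inner_self_eq_norm_sq] at h₂
    linarith
  have hr : 0 < a₁⁻¹ := inv_pos.2 ha₁
  have hra : a₁⁻¹ * a₁ = 1 := inv_mul_cancel₀ ha₁.ne'
  have hγ : 0 < γ := by linarith
  have hyoung : (1 + 4 * α * a₁⁻¹) * ⟪u₂ - u₁, z₂ - z₁⟫ ≤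
      3 * N ^ 2 * γ / (2 * a₁ ^ 2) * d ^ 2 + (2 * α + a₁ / 2) * ‖z₂ - z₁‖ ^ 2 := by
    have e₁ : (1 + 4 * α * a₁⁻¹) * (N * d * ‖z₂ - z₁‖) =
        (2 * α + a₁ / 2) * (2 * (N * d * a₁⁻¹) * ‖z₂ - z₁‖) := by
      field_simp
      ring
    have e₂ : 3 * N ^ 2 * γ / (2 * a₁ ^ 2) * d ^ 2 = 3 * γ / 2 * (N * d * a₁⁻¹) ^ 2 := by
      field_simp
    calc (1 + 4 * α * a₁⁻¹) * ⟪u₂ - u₁, z₂ - z₁⟫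
        ≤ (1 + 4 * α * a₁⁻¹) * (N * d * ‖z₂ - z₁‖) := by gcongr
      _ ≤ (2 * α + a₁ / 2) * ((N * d * a₁⁻¹) ^ 2 + ‖z₂ - z₁‖ ^ 2) := by
          rw [e₁]
          gcongr
          exact two_mul_le_add_sq _ _
      _ ≤ _ := by
          rw [e₂, mul_add]
          gcongr
          linarith
  have hmon' := mul_le_mul_of_nonneg_left hmon (by positivity : 0 ≤ 4 * α * a₁⁻¹)
  have hcoef : (2 * α ^ 2 * a₂⁻¹) * ‖z₂ - z₁‖ ^ 2 ≤
      (2 * α ^ 2 * (a₁⁻¹ + γ⁻¹)) * ‖z₂ - z₁‖ ^ 2 := by gcongr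
  have hJ' := mul_le_mul_of_nonneg_left hJ (by positivity : 0 ≤ α / 2 + 2 * α ^ 2 * a₁⁻¹)
  have hnn : 0 ≤ (a₀ - a₁) * (1 / 2 + 2 * α * a₁⁻¹) * ‖z₂ - z₁‖ ^ 2 := by
    have := sub_nonneg.2 ha₁₀
    positivity
  have hz₁ : ⟪z₁, z₂ - z₁⟫ = (‖z₂‖ ^ 2 - ‖z₁‖ ^ 2 - ‖z₂ - z₁‖ ^ 2) / 2 := by linarith
  rw [hz₁] at hdec hmon'
  have e : 4 * α * a₁⁻¹ * ((α + a₁) * ‖z₂ - z₁‖ ^ 2) =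
      4 * α ^ 2 * a₁⁻¹ * ‖z₂ - z₁‖ ^ 2 + 4 * α * ‖z₂ - z₁‖ ^ 2 := by
    linear_combination 4 * α * ‖z₂ - z₁‖ ^ 2 * hra
  rw [e] at hmon'
  simp only [div_eq_mul_inv _ a₁, div_eq_mul_inv _ a₂, div_eq_mul_inv _ γ]
  linarith

/-- A sequence that is bounded below and decreases up to a nonnegative dissipation converges, and
the dissipation vanishes. -/
lemma tendsto_of_dissipation {e D : ℕ → ℝ} {m : ℝ} (hm : ∀ k, m ≤ e k) (hD : ∀ k, 0 ≤ D k)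
    (h : ∀ k, e (k + 1) + D k ≤ e k) :
    (∃ L, Tendsto e atTop (nhds L)) ∧ Tendsto D atTop (nhds 0) := by
  have hanti : Antitone e := antitone_nat_of_succ_le fun k => by linarith [h k, hD k]
  have hlim := tendsto_atTop_ciInf hanti ⟨m, by rintro _ ⟨k, rfl⟩; exact hm k⟩
  refine ⟨⟨_, hlim⟩, squeeze_zero hD (fun k => le_sub_iff_add_le'.2 (h k)) ?_⟩
  simpa using hlim.sub ((tendsto_add_atTop_iff_nat 1).2 hlim)

lemma tendsto_zero_of_mul_sq_le {c : ℝ} (hc : 0 < c) {u D : ℕ → ℝ} (hu : ∀ k, 0 ≤ u k)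
    (h : ∀ k, c * u k ^ 2 ≤ D k) (hD : Tendsto D atTop (nhds 0)) :
    Tendsto u atTop (nhds 0) := by
  have hsq : Tendsto (fun k => u k ^ 2) atTop (nhds 0) := by
    refine squeeze_zero (fun k => sq_nonneg _) (g := fun k => c⁻¹ * D k) (fun k => ?_) ?_
    · rw [inv_mul_eq_div, le_div_iff₀' hc]
      exact h k
    · simpa using hD.const_mul c⁻¹
  have := hsq.sqrt
  simpa [Real.sqrt_sq (hu _)] using this

end Energy

/-- (Theorem 4.2 of the paper.)  For the DPFS iteration with `G = g*`,
`H = f*`, `A(S) ⊆ ri(dom g)`, the objective bounded below on `S` by `F̲`, and the adaptive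
step-size regime `α_k ↓ α`, `δ_k = α/α_k`, `β̲ ≤ β_k ≤ β̄`,
`ρ_k = ℓ/2 + 3σ_Aγ/(2(α_k − α)²) + μ`, if `(z^k)` is bounded then the energy `(ψ_k)_{k ≥ 2}`
is bounded below and converges to a real limit, and the discrete velocities
`‖x^k − x^{k+1}‖`, `‖y^k − y^{k+1}‖`, `‖z^k − z^{k+1}‖` all tend to `0`. -/
theorem stmt_4 (n s p : ℕ)
    (S : Set (EuclideanSpace ℝ (Fin n)))
    (hSne : S.Nonempty) (hSconv : Convex ℝ S) (hScomp : IsCompact S)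
    (φ : EuclideanSpace ℝ (Fin n) → ℝ)
    (gφ : EuclideanSpace ℝ (Fin n) → EuclideanSpace ℝ (Fin n))
    (ℓ : ℝ)
    (hφ : ∀ u, HasGradientAt φ (gφ u) u)
    (hφlip : ∀ u v, ‖gφ u - gφ v‖ ≤ ℓ * ‖u - v‖)
    (A : EuclideanSpace ℝ (Fin n) →L[ℝ] EuclideanSpace ℝ (Fin s))
    (K : EuclideanSpace ℝ (Fin n) →L[ℝ] EuclideanSpace ℝ (Fin p))
    (g : EuclideanSpace ℝ (Fin s) → EReal)
    (hgproper₁ : ∀ v, g v ≠ ⊥) (hgproper₂ : ∃ v, g v ≠ ⊤)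
    (hgconv : ∀ v w : EuclideanSpace ℝ (Fin s), ∀ a b : ℝ, 0 ≤ a → 0 ≤ b → a + b = 1 →
      g (a • v + b • w) ≤ (a : EReal) * g v + (b : EReal) * g w)
    (hglsc : LowerSemicontinuous g)
    (f : EuclideanSpace ℝ (Fin p) → EReal)
    (hfproper₁ : ∀ v, f v ≠ ⊥) (hfproper₂ : ∃ v, f v ≠ ⊤)
    (hfconv : ∀ v w : EuclideanSpace ℝ (Fin p), ∀ a b : ℝ, 0 ≤ a → 0 ≤ b → a + b = 1 →
      f (a • v + b • w) ≤ (a : EReal) * f v + (b : EReal) * f w)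
    (hflsc : LowerSemicontinuous f)
    -- `G = g*` and `H = f*` are the Fenchel conjugates
    (G : EuclideanSpace ℝ (Fin s) → EReal)
    (hG : ∀ w, G w = ⨆ v, ((⟪w, v⟫ : ℝ) : EReal) - g v)
    (H : EuclideanSpace ℝ (Fin p) → EReal)
    (hH : ∀ w, H w = ⨆ v, ((⟪w, v⟫ : ℝ) : EReal) - f v)
    -- Assumption 3.1: `A(S) ⊆ ri (dom g)` and the objective is bounded below on `S`
    (hAS : A '' S ⊆ intrinsicInterior ℝ {v | g v ≠ ⊤})
    (Flb : ℝ)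
    (hFlb : ∀ u ∈ S, f (K u) + (Flb : EReal) ≤ g (A u) + ((φ u : ℝ) : EReal))
    -- parameters
    (γ αl μ : ℝ) (hγ : 0 < γ) (hαl : 0 < αl) (hαlγ : αl < γ / 2) (hμ : 0 < μ)
    (α β ρ δ : ℕ → ℝ)
    (hαtend : Tendsto α atTop (nhds αl))
    (hα0 : α 0 ≤ αl + γ)
    (hαmono : ∀ k, α (k + 1) ≤ α k) (hαgt : ∀ k, αl < α k)
    (hscalar2 : ∀ k, (α k - α (k + 1)) / ((α (k + 1) - αl) * (α k - αl)) ≤ 1 / γ ∧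
      (α k - αl) * (α (k + 2) - αl) ≥ (α (k + 1) - αl) ^ 2)
    (βlo βhi : ℝ) (hβlo : 0 < βlo)
    (hβ : ∀ k, βlo ≤ β k ∧ β k ≤ βhi)
    (hδ : ∀ k, δ k = αl / α k)
    (hρ : ∀ k, ρ k = ℓ / 2 + 3 * ‖A‖ ^ 2 * γ / (2 * (α k - αl) ^ 2) + μ)
    -- the iterates
    (x : ℕ → EuclideanSpace ℝ (Fin n))
    (y : ℕ → EuclideanSpace ℝ (Fin p))
    (z : ℕ → EuclideanSpace ℝ (Fin s))
    (hx0 : x 0 ∈ S)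
    (hxS : ∀ k, x (k + 1) ∈ S)
    (hxmin : ∀ k, ∀ v ∈ S,
      ‖x (k + 1) - (x k - (ρ k)⁻¹ •
        (ContinuousLinearMap.adjoint A (z k) - ContinuousLinearMap.adjoint K (y k) + gφ (x k)))‖ ≤
      ‖v - (x k - (ρ k)⁻¹ •
        (ContinuousLinearMap.adjoint A (z k) - ContinuousLinearMap.adjoint K (y k) + gφ (x k)))‖)
    (hymin : ∀ k, ∀ w : EuclideanSpace ℝ (Fin p),
      H (y (k + 1)) + ((-⟪K (x (k + 1)), y (k + 1)⟫ + β k / 2 * ‖y (k + 1) - y k‖ ^ 2 : ℝ) : EReal) ≤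
      H w + ((-⟪K (x (k + 1)), w⟫ + β k / 2 * ‖w - y k‖ ^ 2 : ℝ) : EReal))
    (hzmin : ∀ k, ∀ w : EuclideanSpace ℝ (Fin s),
      G (z (k + 1)) + ((-⟪A (x (k + 1)), z (k + 1)⟫ + α k / 2 * ‖z (k + 1) - δ k • z k‖ ^ 2 : ℝ) : EReal) ≤
      G w + ((-⟪A (x (k + 1)), w⟫ + α k / 2 * ‖w - δ k • z k‖ ^ 2 : ℝ) : EReal))
    -- the energy sequence
    (ψ : ℕ → EReal)
    (hψ : ∀ k, 2 ≤ k → ψ k =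
      ((⟪z k, A (x k)⟫ : ℝ) : EReal) - G (z k) + ((φ (x k) - ⟪K (x k), y k⟫ : ℝ) : EReal) + H (y k) +
      ((αl * (1 / 2 + 2 * αl / (α k - αl)) * ‖z k - z (k - 1)‖ ^ 2 -
        ((1 / 2) * (α (k - 2) - αl) - 2 * αl * (α (k - 1) - α (k - 2)) / (α (k - 1) - αl)) *
          ‖z k‖ ^ 2 : ℝ) : EReal))
    -- boundedness of the dual iterates
    (hzbdd : ∃ C : ℝ, ∀ k, ‖z k‖ ≤ C) :
    (∃ mlb : ℝ, ∀ k, 2 ≤ k → (mlb : EReal) ≤ ψ k) ∧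
    (∃ L : ℝ, Tendsto (fun k => ψ k) atTop (nhds (L : EReal))) ∧
    Tendsto (fun k => ‖x k - x (k + 1)‖) atTop (nhds 0) ∧
    Tendsto (fun k => ‖y k - y (k + 1)‖) atTop (nhds 0) ∧
    Tendsto (fun k => ‖z k - z (k + 1)‖) atTop (nhds 0) := by
  have hxS' : ∀ k, x k ∈ S := fun k => by cases k <;> simp_all
  obtain ⟨C, hC⟩ := hzbdd
  have hC0 : 0 ≤ C := (norm_nonneg _).trans (hC 0)
  have hGbot := conjugate_ne_bot hgproper₁ hgproper₂ hG
  have hHbot := conjugate_ne_bot hfproper₁ hfproper₂ hH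
  obtain ⟨wG, hwG⟩ := exists_conjugate_ne_top hgproper₁ hgproper₂ hgconv hglsc hG
  obtain ⟨wH, hwH⟩ := exists_conjugate_ne_top hfproper₁ hfproper₂ hfconv hflsc hH
  have hGfin : ∀ k, ∃ r : ℝ, G (z (k + 1)) = r := fun k =>
    ⟨_, (EReal.coe_toReal (ne_top_of_add_coe_le hwG (hzmin k wG)) (hGbot _)).symm⟩
  have hHfin : ∀ k, ∃ r : ℝ, H (y (k + 1)) = r := fun k =>
    ⟨_, (EReal.coe_toReal (ne_top_of_add_coe_le hwH (hymin k wH)) (hHbot _)).symm⟩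
  choose Gr hGr using hGfin
  choose Hr hHr using hHfin
  set a : ℕ → ℝ := fun k => α k - αl with ha
  have hαa : ∀ k, α k = αl + a k := fun k => by simp [ha]
  have hapos : ∀ k, 0 < a k := fun k => sub_pos.2 (hαgt k)
  have hamono : ∀ k, a (k + 1) ≤ a k := fun k => sub_le_sub_right (hαmono k) _
  have hale : ∀ k, a k ≤ a 0 := fun k => antitone_nat_of_succ_le hamono (Nat.zero_le k)
  have haγ : ∀ k, a k ≤ γ := fun k => (hale k).trans (by simp only [ha]; linarith)
  have hainv : ∀ k, (a (k + 1))⁻¹ ≤ (a k)⁻¹ + γ⁻¹ := fun k => by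
    have h := (hscalar2 k).1
    have e : (α k - α (k + 1)) / ((α (k + 1) - αl) * (α k - αl)) = (a (k + 1))⁻¹ - (a k)⁻¹ := by
      rw [inv_sub_inv (hapos _).ne' (hapos _).ne']
      simp [ha]
    rw [e, one_div] at h
    linarith
  have hsub : ∀ k j, Gr k + ⟪A (x (k + 1)) - ((αl + a k) • z (k + 1) - αl • z k),
      z (j + 1) - z (k + 1)⟫ ≤ Gr j := fun k j => by
    have h := prox_subgradient hgproper₁ hG (hGr k) (hzmin k) (hGr j)
    rwa [smul_sub, smul_smul, hδ, mul_div_cancel₀ _ (hαl.trans (hαgt k)).ne', hαa] at h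
  have hystep : ∀ k, Hr (k + 1) - ⟪K (x (k + 2)), y (k + 2)⟫ +
      βlo / 2 * ‖y (k + 1) - y (k + 2)‖ ^ 2 ≤ Hr k - ⟪K (x (k + 2)), y (k + 1)⟫ := fun k => by
    have h := hymin (k + 1) (y (k + 1))
    rw [hHr, hHr] at h
    have h' : Hr (k + 1) + (-⟪K (x (k + 2)), y (k + 2)⟫ +
        β (k + 1) / 2 * ‖y (k + 2) - y (k + 1)‖ ^ 2) ≤ Hr k + (-⟪K (x (k + 2)), y (k + 1)⟫ +
        β (k + 1) / 2 * ‖y (k + 1) - y (k + 1)‖ ^ 2) := by exact_mod_cast h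
    rw [sub_self, norm_zero, norm_sub_rev] at h'
    nlinarith [mul_le_mul_of_nonneg_right (hβ (k + 1)).1 (sq_nonneg ‖y (k + 1) - y (k + 2)‖)]
  have hxstep : ∀ k, ⟪z k, A (x (k + 1))⟫ + φ (x (k + 1)) - ⟪K (x (k + 1)), y k⟫ +
      (3 * ‖A‖ ^ 2 * γ / (2 * a k ^ 2) + μ) * ‖x k - x (k + 1)‖ ^ 2 ≤
      ⟪z k, A (x k)⟫ + φ (x k) - ⟪K (x k), y k⟫ := fun k => by
    by_cases hxx : x (k + 1) = x k
    · simp [hxx]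
    have hℓ : 0 ≤ ℓ := by
      have h := (norm_nonneg _).trans (hφlip (x (k + 1)) (x k))
      exact nonneg_of_mul_nonneg_left h (norm_pos_iff.2 (sub_ne_zero.2 hxx))
    have hρpos : 0 < ρ k := by
      have := hapos k
      rw [hρ]
      positivity
    have h₁ := inner_le_of_projected_step hSconv hρpos (hxS' k) (hxS' (k + 1)) (hxmin k)
    have h₂ := le_quadratic_of_gradient_lipschitz hφ hφlip (x k) (x (k + 1))
    rw [inner_add_left, inner_sub_left, ContinuousLinearMap.adjoint_inner_left,
      ContinuousLinearMap.adjoint_inner_left, map_sub, map_sub, inner_sub_right (z k),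
      inner_sub_right (y k), real_inner_comm _ (y k), real_inner_comm _ (y k), hρ] at h₁
    rw [norm_sub_rev (x k)]
    simp only [ha]
    linarith
  set c : ℕ → ℝ := fun m => 1 / 2 * a m + 2 * αl * (a m - a (m + 1)) / a (m + 1) with hc
  have hc0 : ∀ m, 0 ≤ c m := fun m => by
    have h₁ := hapos m
    have h₂ := hapos (m + 1)
    have h₃ := sub_nonneg.2 (hamono m)
    positivity
  have hcmono : ∀ m, c (m + 1) ≤ c m := fun m => by
    have h₁ := hapos (m + 1)
    have h₂ := hapos (m + 2)
    have h : (a (m + 1) - a (m + 2)) / a (m + 2) ≤ (a m - a (m + 1)) / a (m + 1) := by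
      rw [div_le_div_iff₀ h₂ h₁]
      have := (hscalar2 m).2
      simp only [ha]
      linarith
    have h' := mul_le_mul_of_nonneg_left h (by positivity : 0 ≤ 2 * αl)
    simp only [hc, mul_div_assoc (2 * αl)]
    linarith [hamono m]
  set P : ℕ → ℝ := fun m => ⟪z (m + 2), A (x (m + 2))⟫ - Gr (m + 1) +
    (φ (x (m + 2)) - ⟪K (x (m + 2)), y (m + 2)⟫) + Hr (m + 1) +
    (αl * (1 / 2 + 2 * αl / a (m + 2)) * ‖z (m + 2) - z (m + 1)‖ ^ 2 - c m * ‖z (m + 2)‖ ^ 2)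
    with hP
  have hψP : ∀ m, ψ (m + 2) = (P m : EReal) := fun m => by
    rw [hψ (m + 2) (Nat.le_add_left _ _), hGr, hHr]
    norm_cast
    have e : 1 / 2 * (α m - αl) - 2 * αl * (α (m + 1) - α m) / (α (m + 1) - αl) = c m := by
      simp only [hc, ha]
      ring
    simp only [Nat.add_sub_cancel, Nat.add_succ_sub_one, e]
    rfl
  have hηpos : 0 < αl - 2 * αl ^ 2 / γ := by
    rw [sub_pos, div_lt_iff₀ hγ]
    nlinarith
  set D : ℕ → ℝ := fun m => μ * ‖x (m + 2) - x (m + 3)‖ ^ 2 +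
    βlo / 2 * ‖y (m + 2) - y (m + 3)‖ ^ 2 +
    (αl - 2 * αl ^ 2 / γ) * ‖z (m + 2) - z (m + 3)‖ ^ 2 with hD
  have hstep : ∀ m, P (m + 1) + C ^ 2 * c (m + 1) + D m ≤ P m + C ^ 2 * c m := fun m => by
    have hu : ‖A (x (m + 3)) - A (x (m + 2))‖ ≤ ‖A‖ * ‖x (m + 2) - x (m + 3)‖ := by
      rw [← map_sub, norm_sub_rev (x (m + 2))]
      exact A.le_opNorm _
    have h₁ := dual_energy_step hαl hαlγ (hapos (m + 2)) (hamono (m + 1)) (haγ _) (hainv (m + 2))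
      (hsub (m + 1) (m + 2)) (hsub (m + 2) (m + 1)) hu
    have h₂ := hxstep (m + 2)
    have h₃ := hystep (m + 1)
    have h₄ : (c m - c (m + 1)) * ‖z (m + 2)‖ ^ 2 ≤ (c m - c (m + 1)) * C ^ 2 := by
      have := sub_nonneg.2 (hcmono m)
      have := hC (m + 2)
      gcongr
    have h₅ : ‖z (m + 2) - z (m + 3)‖ = ‖z (m + 3) - z (m + 2)‖ := norm_sub_rev _ _
    change _ - c (m + 1) * _ + _ ≤ _ - c (m + 1) * _ + _ at h₁
    simp only [hP, hD, h₅]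
    linarith
  obtain ⟨M, hM⟩ := exists_upper_bound_of_subset_intrinsicInterior hgproper₁ hgconv
    (hScomp.image A.continuous) hAS
  obtain ⟨B, hB⟩ := (hScomp.image A.continuous).isBounded.exists_norm_le
  have hprimal : ∀ k, Flb - M ≤ φ (x (k + 1)) - ⟪K (x (k + 1)), y (k + 1)⟫ + Hr k := fun k => by
    have hgM := hM _ (Set.mem_image_of_mem A (hxS' (k + 1)))
    have hf : f (K (x (k + 1))) ≤ ((M + φ (x (k + 1)) - Flb : ℝ) : EReal) := by
      have h := (hFlb _ (hxS' (k + 1))).trans (add_le_add hgM le_rfl)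
      push_cast
      rw [EReal.le_sub_iff_add_le (.inl (EReal.coe_ne_bot _)) (.inl (EReal.coe_ne_top _))]
      exact h
    have h := (conjugate_le_coe_iff hfproper₁ hH).1 (hHr k).le _ _ hf
    rw [real_inner_comm] at h
    linarith
  have hdual : ∀ k, -(C * B) - (B + (α 0 * C + αl * C)) * (C + C) - Gr 0 ≤
      ⟪z (k + 1), A (x (k + 1))⟫ - Gr k := fun k => by
    have hAx := hB _ (Set.mem_image_of_mem A (hxS' (k + 1)))
    have hB0 := (norm_nonneg _).trans hAx
    have hαpos : 0 < αl + a k := by linarith [hapos k]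
    have hα0k : αl + a k ≤ α 0 := by rw [hαa 0]; linarith [hale k]
    have h₁ : ‖A (x (k + 1)) - ((αl + a k) • z (k + 1) - αl • z k)‖ ≤
        B + (α 0 * C + αl * C) := by
      refine (norm_sub_le _ _).trans (add_le_add hAx ((norm_sub_le _ _).trans ?_))
      rw [norm_smul, norm_smul, Real.norm_of_nonneg hαpos.le, Real.norm_of_nonneg hαl.le]
      have := hC k
      have := hC (k + 1)
      have := hαpos.le.trans hα0k
      gcongr
    have h₂ : ‖z (0 + 1) - z (k + 1)‖ ≤ C + C :=
      (norm_sub_le _ _).trans (add_le_add (hC _) (hC _))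
    have h₃ := (abs_le.1 ((abs_real_inner_le_norm _ _).trans
      (mul_le_mul h₁ h₂ (norm_nonneg _) ((norm_nonneg _).trans h₁)))).1
    have h₄ := (abs_le.1 ((abs_real_inner_le_norm (z (k + 1)) (A (x (k + 1)))).trans
      (mul_le_mul (hC _) hAx (norm_nonneg _) hC0))).1
    have h₅ := hsub k 0
    linarith
  obtain ⟨mlb, hmlb⟩ : ∃ mlb : ℝ, ∀ m, mlb ≤ P m := by
    refine ⟨-(C * B) - (B + (α 0 * C + αl * C)) * (C + C) - Gr 0 + (Flb - M) - c 0 * C ^ 2,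
      fun m => ?_⟩
    have h₁ : 0 ≤ αl * (1 / 2 + 2 * αl / a (m + 2)) * ‖z (m + 2) - z (m + 1)‖ ^ 2 := by
      have := hapos (m + 2)
      positivity
    have h₂ : c m * ‖z (m + 2)‖ ^ 2 ≤ c 0 * C ^ 2 := by
      have h₃ : c m ≤ c 0 := antitone_nat_of_succ_le hcmono (Nat.zero_le m)
      have := hC (m + 2)
      have := hc0 0
      gcongr
    have h₃ := hprimal (m + 1)
    have h₄ := hdual (m + 1)
    simp only [hP]
    linarith
  obtain ⟨⟨L, hL⟩, hD0⟩ := tendsto_of_dissipation (e := fun m => P m + C ^ 2 * c m) (D := D)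
    (m := mlb) (fun m => le_add_of_le_of_nonneg (hmlb m) (mul_nonneg (sq_nonneg C) (hc0 m)))
    (fun m => by simp only [hD]; positivity) hstep
  obtain ⟨⟨Lc, hLc⟩, -⟩ := tendsto_of_dissipation (e := c) (D := fun _ => 0) (m := 0) hc0
    (fun _ => le_rfl) (by simpa using hcmono)
  refine ⟨⟨mlb, fun k hk => ?_⟩, ⟨L - C ^ 2 * Lc, ?_⟩, ?_, ?_, ?_⟩
  · obtain ⟨m, rfl⟩ := Nat.exists_eq_add_of_le' hk
    rw [hψP]
    exact_mod_cast hmlb m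
  · rw [← tendsto_add_atTop_iff_nat 2]
    simp only [hψP]
    refine (continuous_coe_real_ereal.tendsto _).comp ?_
    exact (hL.sub (hLc.const_mul (C ^ 2))).congr fun m => add_sub_cancel_right _ _
  all_goals rw [← tendsto_add_atTop_iff_nat 2]
  · refine tendsto_zero_of_mul_sq_le hμ (fun _ => norm_nonneg _) (fun m => ?_) hD0
    have : 0 ≤ βlo / 2 * ‖y (m + 2) - y (m + 3)‖ ^ 2 := by positivity
    have : 0 ≤ (αl - 2 * αl ^ 2 / γ) * ‖z (m + 2) - z (m + 3)‖ ^ 2 := by positivity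
    simp only [hD]
    linarith
  · refine tendsto_zero_of_mul_sq_le (half_pos hβlo) (fun _ => norm_nonneg _) (fun m => ?_) hD0
    have : 0 ≤ μ * ‖x (m + 2) - x (m + 3)‖ ^ 2 := by positivity
    have : 0 ≤ (αl - 2 * αl ^ 2 / γ) * ‖z (m + 2) - z (m + 3)‖ ^ 2 := by positivity
    simp only [hD]
    linarith
  · refine tendsto_zero_of_mul_sq_le hηpos (fun _ => norm_nonneg _) (fun m => ?_) hD0
    have : 0 ≤ μ * ‖x (m + 2) - x (m + 3)‖ ^ 2 := by positivity
    have : 0 ≤ βlo / 2 * ‖y (m + 2) - y (m + 3)‖ ^ 2 := by positivity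
    simp only [hD]
    linarith
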